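/- Let ν ∈ ℝ. For every t ∈ ℝ, lim_{s→0, s≠0} K^B_{22,free}(γ(t), γ(t+s)) = (3−ν)κ(t)/(8π), where for x ≠ y, with r = x − y, n_x = n(t), τ_x = τ(t): K^B_{22,free}(x,y) = G^B_{n_x n_x n_x}(x,y) + (2−ν) G^B_{n_x τ_x τ_x}(x,y) + (1−ν)κ(t)·[ G^B_{τ_x τ_x}(x,y) − G^B_{n_x n_x}(x,y) ], with G^B_{n_x n_x n_x}(x,y) = (3/(4π))(r·n_x)/‖r‖² − (1/(2π))(r·n_x)³/‖r‖⁴, G^B_{n_x τ_x τ_x}(x,y) = −(1/(2π))(r·n_x)(r·τ_x)²/‖r‖⁴ + (1/(4π))(r·n_x)/‖r‖², and G^B_{τ_x τ_x}(x,y) − G^B_{n_x n_x}(x,y) = 1/(4π) − (1/(2π))(r·n_x)²/‖r‖². -/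

import Mathlib

open Real Filter Topology MeasureTheory

noncomputable section

/-- Euclidean dot product on `ℝ × ℝ`. -/
def dot2 (v w : ℝ × ℝ) : ℝ := v.1 * w.1 + v.2 * w.2

/-- Unit tangent vector `τ(s) = γ′(s)`. -/
def tang (γ : ℝ → ℝ × ℝ) (s : ℝ) : ℝ × ℝ := deriv γ s

/-- Unit normal vector `n(s) = (τ₂(s), −τ₁(s))`. -/
def nor (γ : ℝ → ℝ × ℝ) (s : ℝ) : ℝ × ℝ := ((deriv γ s).2, -(deriv γ s).1)

/-- Signed curvature `κ(s) = −γ″(s)·n(s)`. -/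
def curv (γ : ℝ → ℝ × ℝ) (s : ℝ) : ℝ := -(dot2 (deriv (deriv γ) s) (nor γ s))

/-- The free-plate kernel
`K^B_{22,free}(x,y) = G^B_{n_x n_x n_x} + (2−ν) G^B_{n_x τ_x τ_x}
  + (1−ν)κ(t)(G^B_{τ_x τ_x} − G^B_{n_x n_x})`, given by explicit formulas,
with `r = x − y`, `n_x = n(t)`, `τ_x = τ(t)`. -/
def K22free (γ : ℝ → ℝ × ℝ) (ν : ℝ) (t : ℝ) (x y : ℝ × ℝ) : ℝ :=
  (3 / (4 * π) * dot2 (x - y) (nor γ t) / dot2 (x - y) (x - y)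
      - 1 / (2 * π) * (dot2 (x - y) (nor γ t)) ^ 3 / (dot2 (x - y) (x - y)) ^ 2)
    + (2 - ν) *
      (-(1 / (2 * π)) * dot2 (x - y) (nor γ t) * (dot2 (x - y) (tang γ t)) ^ 2
          / (dot2 (x - y) (x - y)) ^ 2
        + 1 / (4 * π) * dot2 (x - y) (nor γ t) / dot2 (x - y) (x - y))
    + (1 - ν) * curv γ t *
      (1 / (4 * π) - 1 / (2 * π) * (dot2 (x - y) (nor γ t)) ^ 2 / dot2 (x - y) (x - y))

/-!
Write `r = γ t - γ (t + s)`. As `s → 0`, Taylor's formula gives `r·τ = -s + o(s)`,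
`‖r‖² = s² + o(s²)` and, because `γ'(t)` is orthogonal to `n(t)`, `r·n = κ s² / 2 + o(s²)`.
Dividing these by `s`, `s²` and `s²` turns the kernel into a rational function of the quotients and
of `s` that is continuous at the limit point, so its limit is read off by setting `s = 0`.
-/

section Taylor

variable {E : Type*} [NormedAddCommGroup E] [NormedSpace ℝ E] {f f' : ℝ → E} {f'' : E} {t : ℝ}

/- The library's `taylor_isLittleO` covers only functions that are `C²` on a convex set. -/
theorem taylor_two_isLittleO (hf : ∀ᶠ x in 𝓝 t, HasDerivAt f (f' x) x) (hf' : HasDerivAt f' f'' t) :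
    (fun x ↦ f x - f t - (x - t) • f' t - ((x - t) ^ 2 / 2) • f'') =o[𝓝 t]
      fun x ↦ (x - t) ^ 2 := by
  obtain ⟨ε, hε, hball⟩ := Metric.eventually_nhds_iff_ball.1 hf
  have hderiv : ∀ x ∈ Metric.ball t ε, HasDerivWithinAt
      (fun x ↦ f x - f t - (x - t) • f' t - ((x - t) ^ 2 / 2) • f'')
      (f' x - f' t - (x - t) • f'') (Metric.ball t ε) x := fun x hx ↦ by
    have hlin : HasDerivAt (fun x ↦ x - t) 1 x := (hasDerivAt_id x).sub_const t
    have hsq : HasDerivAt (fun x ↦ (x - t) ^ 2 / 2) (x - t) x :=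
      ((hlin.fun_pow 2).div_const 2).congr_deriv (by ring)
    simpa only [one_smul] using ((((hball x hx).sub_const (f t)).fun_sub
      (hlin.smul_const (f' t))).fun_sub (hsq.smul_const f'')).hasDerivWithinAt
  have hsmall : (fun x ↦ f' x - f' t - (x - t) • f'') =o[𝓝[Metric.ball t ε] t]
      fun x ↦ (x - t) ^ 1 := by
    simpa only [pow_one] using hf'.isLittleO.mono nhdsWithin_le_nhds
  simpa [nhdsWithin_eq_nhds.2 (Metric.ball_mem_nhds t hε)] using
    (convex_ball t ε).isLittleO_pow_succ_real (Metric.mem_ball_self hε) hderiv hsmall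

theorem tendsto_taylor_two (hf : ∀ᶠ x in 𝓝 t, HasDerivAt f (f' x) x)
    (hf' : HasDerivAt f' f'' t) :
    Tendsto (fun s ↦ (s ^ 2)⁻¹ • (f (t + s) - f t - s • f' t)) (𝓝[≠] 0)
      (𝓝 ((2 : ℝ)⁻¹ • f'')) := by
  have hshift : Tendsto (fun s ↦ t + s) (𝓝[≠] 0) (𝓝 t) :=
    ((continuous_const_add t).tendsto' 0 t (add_zero t)).mono_left nhdsWithin_le_nhds
  have hrem := ((taylor_two_isLittleO hf hf').comp_tendsto hshift).tendsto_inv_smul_nhds_zero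
  rw [← zero_add ((2 : ℝ)⁻¹ • f'')]
  refine (hrem.add_const _).congr' ?_
  filter_upwards [self_mem_nhdsWithin] with s hs
  have hs : s ≠ 0 := hs
  simp only [Function.comp_apply, add_sub_cancel_left, smul_sub, smul_smul]
  rw [show (s ^ 2)⁻¹ * (s ^ 2 / 2) = 2⁻¹ by field_simp, sub_add_cancel]

end Taylor

theorem dot2_smul_left (c : ℝ) (v w : ℝ × ℝ) : dot2 (c • v) w = c * dot2 v w := by
  simp only [dot2, Prod.smul_fst, Prod.smul_snd, smul_eq_mul]
  ring

theorem dot2_smul_right (c : ℝ) (v w : ℝ × ℝ) : dot2 v (c • w) = c * dot2 v w := by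
  simp only [dot2, Prod.smul_fst, Prod.smul_snd, smul_eq_mul]
  ring

theorem dot2_neg_left (v w : ℝ × ℝ) : dot2 (-v) w = -dot2 v w := by
  simp only [dot2, Prod.fst_neg, Prod.snd_neg]
  ring

theorem dot2_sub_left (u v w : ℝ × ℝ) : dot2 (u - v) w = dot2 u w - dot2 v w := by
  simp only [dot2, Prod.fst_sub, Prod.snd_sub]
  ring

theorem continuous_dot2 : Continuous fun p : (ℝ × ℝ) × (ℝ × ℝ) ↦ dot2 p.1 p.2 := by
  unfold dot2
  fun_prop

theorem tendsto_dot2 {α : Type*} {l : Filter α} {f g : α → ℝ × ℝ} {v w : ℝ × ℝ}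
    (hf : Tendsto f l (𝓝 v)) (hg : Tendsto g l (𝓝 w)) :
    Tendsto (fun x ↦ dot2 (f x) (g x)) l (𝓝 (dot2 v w)) :=
  (continuous_dot2.tendsto (v, w)).comp (hf.prodMk_nhds hg)

theorem dot2_tang_nor (γ : ℝ → ℝ × ℝ) (t : ℝ) : dot2 (tang γ t) (nor γ t) = 0 := by
  simp only [dot2, tang, nor]
  ring

section Chord

variable {γ : ℝ → ℝ × ℝ} {t : ℝ}

theorem tendsto_chord_div (hγ : DifferentiableAt ℝ γ t) :
    Tendsto (fun s ↦ s⁻¹ • (γ t - γ (t + s))) (𝓝[≠] 0) (𝓝 (-tang γ t)) := by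
  simpa only [← smul_neg, neg_sub, tang] using hγ.hasDerivAt.tendsto_slope_zero.neg

theorem tendsto_dot2_chord_tang (hγ : DifferentiableAt ℝ γ t) :
    Tendsto (fun s ↦ dot2 (γ t - γ (t + s)) (tang γ t) / s) (𝓝[≠] 0)
      (𝓝 (-dot2 (tang γ t) (tang γ t))) := by
  simpa only [dot2_smul_left, dot2_neg_left, inv_mul_eq_div] using
    tendsto_dot2 (tendsto_chord_div hγ) tendsto_const_nhds

theorem tendsto_dot2_chord_self (hγ : DifferentiableAt ℝ γ t) :
    Tendsto (fun s ↦ dot2 (γ t - γ (t + s)) (γ t - γ (t + s)) / s ^ 2) (𝓝[≠] 0)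
      (𝓝 (dot2 (tang γ t) (tang γ t))) := by
  have hlim := tendsto_dot2 (tendsto_chord_div hγ) (tendsto_chord_div hγ)
  rw [show dot2 (-tang γ t) (-tang γ t) = dot2 (tang γ t) (tang γ t) by simp [dot2]] at hlim
  refine hlim.congr fun s ↦ ?_
  rw [dot2_smul_left, dot2_smul_right]
  ring

/- The first-order term of the Taylor expansion is tangential, so the normal component of the chord
is of second order. -/
theorem tendsto_dot2_chord_nor (hγ : ∀ᶠ s in 𝓝 t, DifferentiableAt ℝ γ s)
    (hγ' : DifferentiableAt ℝ (deriv γ) t) :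
    Tendsto (fun s ↦ dot2 (γ t - γ (t + s)) (nor γ t) / s ^ 2) (𝓝[≠] 0) (𝓝 (curv γ t / 2)) := by
  have hlim := (tendsto_dot2 (tendsto_taylor_two (hγ.mono fun _ h ↦ h.hasDerivAt) hγ'.hasDerivAt)
    (tendsto_const_nhds (x := nor γ t))).neg
  rw [dot2_smul_left, show -(2⁻¹ * dot2 (deriv (deriv γ) t) (nor γ t)) = curv γ t / 2 by
    rw [curv]; ring] at hlim
  refine hlim.congr fun s ↦ ?_
  have htang : dot2 (deriv γ t) (nor γ t) = 0 := dot2_tang_nor γ t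
  simp only [dot2_smul_left, dot2_sub_left, htang]
  ring

end Chord

/-- The free-plate kernel as a function of the rescaled chord components `a = r·n_x / σ²`,
`b = r·τ_x / σ` and `d = ‖r‖² / σ²`, with `κ` the curvature at the base point. Only nonnegative
powers of `σ` are left, so the diagonal limit `σ → 0` is a value of this function. -/
def scaledKernel (ν κ σ a b d : ℝ) : ℝ :=
  (3 / (4 * π) * a / d - 1 / (2 * π) * (σ ^ 2 * a ^ 3) / d ^ 2)
    + (2 - ν) * (-(1 / (2 * π)) * a * b ^ 2 / d ^ 2 + 1 / (4 * π) * a / d)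
    + (1 - ν) * κ * (1 / (4 * π) - 1 / (2 * π) * (σ ^ 2 * a ^ 2) / d)

theorem K22free_eq_scaledKernel (γ : ℝ → ℝ × ℝ) (ν t : ℝ) (x y : ℝ × ℝ) {σ : ℝ} (hσ : σ ≠ 0) :
    K22free γ ν t x y = scaledKernel ν (curv γ t) σ (dot2 (x - y) (nor γ t) / σ ^ 2)
      (dot2 (x - y) (tang γ t) / σ) (dot2 (x - y) (x - y) / σ ^ 2) := by
  unfold K22free scaledKernel
  rcases eq_or_ne (dot2 (x - y) (x - y)) 0 with hd | hd
  · simp [hd]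
  · field_simp

theorem continuousAt_scaledKernel (ν κ σ a b : ℝ) {d : ℝ} (hd : d ≠ 0) :
    ContinuousAt (fun p : ℝ × ℝ × ℝ × ℝ ↦ scaledKernel ν κ p.1 p.2.1 p.2.2.1 p.2.2.2)
      (σ, a, b, d) := by
  unfold scaledKernel
  fun_prop (disch := simpa using hd)

theorem scaledKernel_zero (ν κ : ℝ) :
    scaledKernel ν κ 0 (κ / 2) (-1) 1 = (3 - ν) * κ / (8 * π) := by
  unfold scaledKernel
  field_simp
  ring

theorem stmt10_general {γ : ℝ → ℝ × ℝ} {t : ℝ} (hγ : ∀ᶠ s in 𝓝 t, DifferentiableAt ℝ γ s)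
    (hγ' : DifferentiableAt ℝ (deriv γ) t) (hunit : dot2 (deriv γ t) (deriv γ t) = 1) (ν : ℝ) :
    Tendsto (fun s : ℝ => K22free γ ν t (γ t) (γ (t + s))) (𝓝[≠] (0 : ℝ))
      (𝓝 ((3 - ν) * curv γ t / (8 * π))) := by
  have hσ : Tendsto (fun s : ℝ ↦ s) (𝓝[≠] 0) (𝓝 0) := nhdsWithin_le_nhds
  have ha := tendsto_dot2_chord_nor hγ hγ'
  have hb := tendsto_dot2_chord_tang hγ.self_of_nhds
  have hd := tendsto_dot2_chord_self hγ.self_of_nhds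
  have hspeed : dot2 (tang γ t) (tang γ t) = 1 := hunit
  rw [hspeed] at hb hd
  rw [← scaledKernel_zero]
  refine ((continuousAt_scaledKernel ν (curv γ t) 0 _ _ one_ne_zero).tendsto.comp
    (hσ.prodMk_nhds (ha.prodMk_nhds (hb.prodMk_nhds hd)))).congr' ?_
  filter_upwards [self_mem_nhdsWithin] with s hs
  exact (K22free_eq_scaledKernel γ ν t _ _ hs).symm

theorem stmt10 (L : ℝ) (hL : 0 < L) (γ : ℝ → ℝ × ℝ)
    (hγ : ContDiff ℝ (⊤ : ℕ∞) γ)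
    (hper : ∀ s, γ (s + L) = γ s)
    (hinj : Set.InjOn γ (Set.Ico 0 L))
    (harc : ∀ s, dot2 (deriv γ s) (deriv γ s) = 1)
    (ν : ℝ) (t : ℝ) :
    Tendsto (fun s : ℝ => K22free γ ν t (γ t) (γ (t + s))) (𝓝[≠] (0 : ℝ))
      (𝓝 ((3 - ν) * curv γ t / (8 * π))) := by
  exact stmt10_general (.of_forall (hγ.differentiable (by simp)))
    ((contDiff_infty_iff_deriv.1 hγ).2.differentiable (by simp) t) (harc t) ν
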